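/- arXiv:2009.11897 — 3 statements merged into one kernel-verified Lean document; each statement's English description precedes it below -/
import Mathlib

section
/- For every k ∈ {4,5,6} there exists N such that for all n ≥ N and every positive integer m divisible by 6, r_k(ℤ_m^n) ≤ (0.952·m)^n. -/
/-- `A` contains a `k`-term arithmetic progression `a, a+d, …, a+(k-1)d`
whose terms are pairwise distinct. -/
def IsDistinctAP {G : Type*} [AddCommGroup G] (k : ℕ) (A : Set G) : Prop :=
  ∃ a d : G, (∀ i : Fin k, a + (i : ℕ) • d ∈ A) ∧
    Function.Injective fun i : Fin k => a + (i : ℕ) • d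

/-- `rAP k m n` is the largest cardinality of a subset of `(ℤ/mℤ)^n` containing
no `k`-term arithmetic progression of pairwise distinct elements. -/
noncomputable def rAP (k m n : ℕ) : ℕ :=
  sSup {s : ℕ | ∃ A : Finset (Fin n → ZMod m),
    ¬ IsDistinctAP k (A : Set (Fin n → ZMod m)) ∧ A.card = s}

lemma exists_big_support {ι F : Type*} [Fintype ι] [DecidableEq ι] [Field F] [DecidableEq F]
    (V : Submodule F (ι → F)) :
    ∃ f ∈ V, Module.finrank F V ≤ (Finset.univ.filter (fun i => f i ≠ 0)).card := by
  classical
  have hb : BddAbove {s : ℕ | ∃ f ∈ V, (Finset.univ.filter (fun i => f i ≠ 0)).card = s} := by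
    refine ⟨Fintype.card ι, ?_⟩
    rintro s ⟨f, -, rfl⟩
    exact Finset.card_le_univ _
  obtain ⟨f, hf, hs⟩ := Nat.sSup_mem (s := {s : ℕ | ∃ f ∈ V, (Finset.univ.filter (fun i => f i ≠ 0)).card = s})
    ⟨_, 0, V.zero_mem, rfl⟩ hb
  refine ⟨f, hf, ?_⟩
  by_contra! hlt
  set S := Finset.univ.filter (fun i => f i ≠ 0) with hS
  let L : V →ₗ[F] (S → F) := (LinearMap.funLeft F F (fun i : S => (i : ι))).comp V.subtype
  have hk : LinearMap.ker L ≠ ⊥ := by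
    apply LinearMap.ker_ne_bot_of_finrank_lt
    simpa using hlt
  obtain ⟨g, hg, hg0⟩ := Submodule.exists_mem_ne_zero_of_ne_bot hk
  have hgS : ∀ i, f i ≠ 0 → (g : ι → F) i = 0 := by
    intro i hi
    have := congrFun (LinearMap.mem_ker.mp hg) ⟨i, by simp [hS, hi]⟩
    simpa [L, LinearMap.funLeft] using this
  obtain ⟨j, hj⟩ : ∃ j, (g : ι → F) j ≠ 0 := by
    by_contra! h
    exact hg0 (Subtype.ext (funext h))
  have hfj : f j = 0 := by
    by_contra h
    exact hj (hgS j h)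
  have hle : (Finset.univ.filter (fun i => (f + (g : ι → F)) i ≠ 0)).card ≤ S.card := by
    rw [hs]
    exact le_csSup hb ⟨f + g, V.add_mem hf g.2, rfl⟩
  have hsub : insert j S ⊆ Finset.univ.filter (fun i => (f + (g : ι → F)) i ≠ 0) := by
    intro i hi
    rw [Finset.mem_insert] at hi
    rcases hi with rfl | hi
    · simp [hfj, hj]
    · have hi' : f i ≠ 0 := by simpa [hS] using hi
      simp [hgS i hi', hi']
  have h1 := Finset.card_le_card hsub
  rw [Finset.card_insert_of_notMem (by simp [hS, hfj])] at h1
  omega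

lemma slice_rank_bound {ι K F : Type*} [Fintype ι] [DecidableEq ι] [Fintype K] [DecidableEq K]
    [Field F] [DecidableEq F] (p : K → ι → F) (g h l : K → ι → ι → F)
    (hT : ∀ x y z, (if x = y ∧ y = z then (1 : F) else 0) =
      ∑ k, p k x * g k y z + ∑ k, p k y * h k x z + ∑ k, p k z * l k x y) :
    Fintype.card ι ≤ 3 * Fintype.card K := by
  let P : Matrix K ι F := Matrix.of p
  obtain ⟨f, hf, hcard⟩ := exists_big_support (LinearMap.ker P.mulVecLin)
  have hrn := LinearMap.finrank_range_add_finrank_ker P.mulVecLin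
  have hr : Module.finrank F (LinearMap.range P.mulVecLin) ≤ Fintype.card K := P.rank_le_card_height
  rw [Module.finrank_fintype_fun_eq_card] at hrn
  have hf' : ∀ k, ∑ z, p k z * f z = 0 := by
    intro k
    have := congrFun (LinearMap.mem_ker.mp hf) k
    simpa [P, Matrix.mulVec, dotProduct] using this
  let G : Matrix K ι F := Matrix.of fun k y => ∑ z, f z * g k y z
  let H : Matrix ι K F := Matrix.of fun x k => ∑ z, f z * h k x z
  have hD : Matrix.diagonal f = P.transpose * G + H * P := by
    ext x y
    have h1 : Matrix.diagonal f x y = ∑ z, f z * (if x = y ∧ y = z then (1 : F) else 0) := by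
      by_cases hxy : x = y
      · subst hxy; simp
      · simp [hxy]
    rw [h1]
    simp only [hT, Matrix.add_apply, Matrix.mul_apply, P, G, H, Matrix.transpose_apply,
      Matrix.of_apply, mul_add, Finset.sum_add_distrib, Finset.mul_sum, Finset.sum_mul]
    have h3 : ∑ z, ∑ k, f z * (p k z * l k x y) = 0 := by
      rw [Finset.sum_comm]
      refine Finset.sum_eq_zero fun k _ => ?_
      rw [← zero_mul (l k x y), ← hf' k, Finset.sum_mul]
      exact Finset.sum_congr rfl fun z _ => by ring
    rw [h3, add_zero]
    congr 1
    · rw [Finset.sum_comm]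
      exact Finset.sum_congr rfl fun k _ => Finset.sum_congr rfl fun z _ => by ring
    · rw [Finset.sum_comm]
      exact Finset.sum_congr rfl fun k _ => Finset.sum_congr rfl fun z _ => by ring
  have hrank : (Matrix.diagonal f).rank ≤ Fintype.card K + Fintype.card K := by
    rw [hD, ← Matrix.fromCols_mul_fromRows]
    refine (Matrix.rank_mul_le_left _ _).trans ((Matrix.rank_le_card_width _).trans ?_)
    simp
  rw [Matrix.rank_diagonal, Fintype.card_subtype] at hrank
  omega

def cf (e : Fin 3 × Fin 3 × Fin 3) : ZMod 3 :=
  if e = (0, 0, 0) then 1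
  else if e = (2, 0, 0) ∨ e = (0, 2, 0) ∨ e = (0, 0, 2) then 2
  else if e = (1, 1, 0) ∨ e = (1, 0, 1) ∨ e = (0, 1, 1) then 1 else 0

lemma cf_id : ∀ x y z : ZMod 3, 1 - (x + y + z) ^ 2 =
    ∑ e : Fin 3 × Fin 3 × Fin 3, cf e * (x ^ (e.1 : ℕ) * y ^ (e.2.1 : ℕ) * z ^ (e.2.2 : ℕ)) := by
  intro x y z
  simp only [Fintype.sum_prod_type, Fin.sum_univ_three, cf]
  revert x y z
  decide

lemma cf_deg : ∀ e, cf e ≠ 0 → (e.1 : ℕ) + e.2.1 + e.2.2 ≤ 2 := by decide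

def lowM (d : ℕ) : Finset (Fin d → Fin 3) :=
  Finset.univ.filter fun a => 3 * ∑ i, (a i : ℕ) ≤ 2 * d

def mon {d : ℕ} (a : Fin d → Fin 3) (x : Fin d → ZMod 3) : ZMod 3 := ∏ i, x i ^ (a i : ℕ)

lemma tensor_id {d : ℕ} (x y z : Fin d → ZMod 3) :
    (if x + y + z = 0 then (1 : ZMod 3) else 0) =
      ∑ φ : Fin d → Fin 3 × Fin 3 × Fin 3, (∏ i, cf (φ i)) *
        (mon (fun i => (φ i).1) x * mon (fun i => (φ i).2.1) y * mon (fun i => (φ i).2.2) z) := by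
  have h1 : (if x + y + z = 0 then (1 : ZMod 3) else 0) = ∏ i, (1 - (x i + y i + z i) ^ 2) := by
    split_ifs with h
    · symm
      apply Finset.prod_eq_one
      intro i _
      have := congrFun h i
      simp only [Pi.add_apply, Pi.zero_apply] at this
      rw [this]; simp
    · obtain ⟨i, hi⟩ : ∃ i, x i + y i + z i ≠ 0 := by
        by_contra! h'
        exact h (funext h')
      symm
      apply Finset.prod_eq_zero (Finset.mem_univ i)
      have : ∀ s : ZMod 3, s ≠ 0 → 1 - s ^ 2 = 0 := by decide
      exact this _ hi
  rw [h1]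
  simp only [cf_id, Finset.prod_univ_sum, Fintype.piFinset_univ, mon, Finset.prod_mul_distrib]

lemma cap_card {d : ℕ} (A : Finset (Fin d → ZMod 3))
    (hA : ∀ x ∈ A, ∀ y ∈ A, ∀ z ∈ A, x + y + z = 0 → x = y ∧ y = z) :
    A.card ≤ 3 * (lowM d).card := by
  classical
  have := slice_rank_bound (ι := A) (K := lowM d) (F := ZMod 3)
    (fun k x => mon k.1 x.1)
    (fun k y z => ∑ φ : Fin d → Fin 3 × Fin 3 × Fin 3, if k.1 = (fun i => (φ i).1) then
      (∏ i, cf (φ i)) * (mon (fun i => (φ i).2.1) y.1 * mon (fun i => (φ i).2.2) z.1) else 0)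
    (fun k x z => ∑ φ : Fin d → Fin 3 × Fin 3 × Fin 3, if k.1 = (fun i => (φ i).2.1) then
      (if (fun i => (φ i).1) ∈ lowM d then 0 else
      (∏ i, cf (φ i)) * (mon (fun i => (φ i).1) x.1 * mon (fun i => (φ i).2.2) z.1)) else 0)
    (fun k x y => ∑ φ : Fin d → Fin 3 × Fin 3 × Fin 3, if k.1 = (fun i => (φ i).2.2) then
      (if (fun i => (φ i).1) ∈ lowM d ∨ (fun i => (φ i).2.1) ∈ lowM d then 0 else
      (∏ i, cf (φ i)) * (mon (fun i => (φ i).1) x.1 * mon (fun i => (φ i).2.1) y.1)) else 0)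
    ?_
  · simpa using this
  rintro ⟨x, hx⟩ ⟨y, hy⟩ ⟨z, hz⟩
  have h0 : (if (⟨x, hx⟩ : A) = ⟨y, hy⟩ ∧ (⟨y, hy⟩ : A) = ⟨z, hz⟩ then (1 : ZMod 3) else 0) =
      if x + y + z = 0 then 1 else 0 := by
    congr 1
    simp only [Subtype.mk.injEq, eq_iff_iff]
    constructor
    · rintro ⟨rfl, rfl⟩
      funext i
      have : ∀ s : ZMod 3, s + s + s = 0 := by decide
      exact this _
    · exact hA x hx y hy z hz
  rw [h0, tensor_id]
  simp only [Finset.mul_sum]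
  rw [Finset.sum_comm (γ := lowM d), Finset.sum_comm (γ := lowM d), Finset.sum_comm (γ := lowM d),
    ← Finset.sum_add_distrib, ← Finset.sum_add_distrib]
  refine Finset.sum_congr rfl fun φ _ => ?_
  have key : ∀ (a : Fin d → Fin 3) (c : ZMod 3) (w : Fin d → ZMod 3),
      ∑ k : lowM d, mon k.1 w * (if k.1 = a then c else 0) =
        if a ∈ lowM d then mon a w * c else 0 := by
    intro a c w
    rw [Finset.sum_coe_sort (lowM d) (fun k => mon k w * (if k = a then c else 0))]
    simp
  simp only [key]
  by_cases h1 : (fun i => (φ i).1) ∈ lowM d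
  · simp only [h1, if_true, true_or]
    simp only [mul_zero, ite_self]
    ring
  by_cases h2 : (fun i => (φ i).2.1) ∈ lowM d
  · simp only [h1, h2, if_true, if_false, or_true]
    simp only [mul_zero, ite_self]
    ring
  by_cases h3 : (fun i => (φ i).2.2) ∈ lowM d
  · simp only [h1, h2, h3, if_true, if_false, or_self]
    ring
  simp only [h1, h2, h3, if_false]
  have : ∏ i, cf (φ i) = 0 := by
    by_contra hne
    have hi : ∀ i, cf (φ i) ≠ 0 := fun i => (Finset.prod_ne_zero_iff.mp hne) i (Finset.mem_univ i)
    have hs : ∑ i, (((φ i).1 : ℕ) + (φ i).2.1 + (φ i).2.2) ≤ ∑ _i : Fin d, 2 :=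
      Finset.sum_le_sum fun i _ => cf_deg _ (hi i)
    simp only [Finset.sum_add_distrib, Finset.sum_const, Finset.card_univ, Fintype.card_fin,
      smul_eq_mul] at hs
    simp only [lowM, Finset.mem_filter, Finset.mem_univ, true_and, not_le] at h1 h2 h3
    omega
  rw [this]; ring

lemma lowM_card (d : ℕ) : ((lowM d).card : ℝ) ≤ (2.7552 : ℝ) ^ d := by
  have h1 : ((lowM d).card : ℝ) * (0.84 : ℝ) ^ (2 * d) ≤
      ∑ a : Fin d → Fin 3, ∏ i, (0.84 : ℝ) ^ (3 * (a i : ℕ)) := by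
    rw [← nsmul_eq_mul, ← Finset.sum_const]
    refine (Finset.sum_le_sum (g := fun a : Fin d → Fin 3 => ∏ i, (0.84 : ℝ) ^ (3 * (a i : ℕ))) ?_).trans
      (Finset.sum_le_sum_of_subset_of_nonneg (Finset.subset_univ _) ?_)
    · intro a ha
      simp only [lowM, Finset.mem_filter, Finset.mem_univ, true_and] at ha
      rw [Finset.prod_pow_eq_pow_sum, ← Finset.mul_sum]
      exact pow_le_pow_of_le_one (by norm_num) (by norm_num) ha
    · intro a _ _
      positivity
  have h2 : ∑ a : Fin d → Fin 3, ∏ i, (0.84 : ℝ) ^ (3 * (a i : ℕ)) =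
      (1 + 0.84 ^ 3 + 0.84 ^ 6 : ℝ) ^ d := by
    have := Finset.prod_univ_sum (fun _ : Fin d => (Finset.univ : Finset (Fin 3)))
      (fun _ j => (0.84 : ℝ) ^ (3 * (j : ℕ)))
    rw [Fintype.piFinset_univ] at this
    rw [← this]
    simp [Fin.sum_univ_three]
  rw [h2, pow_mul] at h1
  have h3 : (1 + 0.84 ^ 3 + 0.84 ^ 6 : ℝ) ^ d ≤ (2.7552 : ℝ) ^ d * ((0.84 : ℝ) ^ 2) ^ d := by
    rw [← mul_pow]
    exact pow_le_pow_left₀ (by norm_num) (by norm_num) d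
  exact le_of_mul_le_mul_right (h1.trans h3) (by positivity)

def IsCap {d : ℕ} (A : Finset (Fin d → ZMod 3)) : Prop :=
  ∀ x ∈ A, ∀ y ∈ A, ∀ z ∈ A, x + y + z = 0 → x = y ∧ y = z

lemma three_self {d : ℕ} (x : Fin d → ZMod 3) : x + x + x = 0 := by
  funext i
  have : ∀ s : ZMod 3, s + s + s = 0 := by decide
  exact this _

lemma exists_cap {d : ℕ} (S : Finset (Fin d → ZMod 3)) :
    ∃ C ⊆ S, IsCap C ∧ ∀ y ∈ S, y ∉ C → ∃ p ∈ C, ∃ q ∈ C, p ≠ q ∧ p + q + y = 0 := by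
  classical
  obtain ⟨C, hC, hmax⟩ := Finset.exists_max_image (S.powerset.filter IsCap) Finset.card
    ⟨∅, by simp [IsCap]⟩
  simp only [Finset.mem_filter, Finset.mem_powerset] at hC hmax
  refine ⟨C, hC.1, hC.2, fun y hy hyC => ?_⟩
  have hn : ¬ IsCap (insert y C) := by
    intro h
    have := hmax (insert y C) ⟨Finset.insert_subset hy hC.1, h⟩
    rw [Finset.card_insert_of_notMem hyC] at this
    omega
  unfold IsCap at hn
  push Not at hn
  obtain ⟨a, ha, b, hb, c, hc, h0, hne⟩ := hn
  have key : ∀ u v w : Fin d → ZMod 3, u + v + w = 0 → u = v → v = w := by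
    rintro u v w h rfl
    have := three_self u
    exact add_left_cancel (this.trans h.symm)
  have hab : a ≠ b := fun h => hne h (key a b c h0 h)
  have hbc : b ≠ c := fun h => by
    have := key b c a (by rw [← h0]; abel) h
    exact hab (by rw [h, this])
  have hac : a ≠ c := fun h => by
    have := key a c b (by rw [← h0]; abel) h
    exact hbc this.symm
  rw [Finset.mem_insert] at ha hb hc
  rcases ha with rfl | ha
  · refine ⟨b, hb.resolve_left hab.symm, c, hc.resolve_left hac.symm, hbc, by rw [← h0]; abel⟩
  rcases hb with rfl | hb
  · refine ⟨a, ha, c, hc.resolve_left hbc.symm, hac, by rw [← h0]; abel⟩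
  rcases hc with rfl | hc
  · exact ⟨a, ha, b, hb, hab, h0⟩
  · exact absurd (hC.2 a ha b hb c hc h0).1 hab

lemma fiber_bound {d B : ℕ} {X : Type*} [Fintype X]
    (hB : ∀ C : Finset (Fin d → ZMod 3), IsCap C → C.card ≤ B)
    (S : X → Finset (Fin d → ZMod 3))
    (hS : ∀ x x', x ≠ x' → ∀ p q r, p ≠ q → p + q + r = 0 →
      p ∈ S x → q ∈ S x → r ∈ S x → p ∈ S x' → q ∈ S x' → r ∈ S x' → False) :
    ∑ x, (S x).card ≤ Fintype.card X * B + 9 ^ d := by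
  classical
  choose C hCS hC hline using fun x => exists_cap (S x)
  let P : X → Finset ((Fin d → ZMod 3) × (Fin d → ZMod 3)) := fun x =>
    Finset.univ.filter fun pq => pq.1 ≠ pq.2 ∧ pq.1 ∈ S x ∧ pq.2 ∈ S x ∧ -(pq.1 + pq.2) ∈ S x
  have h1 : ∀ x, (S x).card ≤ B + (P x).card := by
    intro x
    have hsub : S x ⊆ C x ∪ (P x).image (fun pq => -(pq.1 + pq.2)) := by
      intro y hy
      rw [Finset.mem_union]
      by_cases hyC : y ∈ C x
      · exact Or.inl hyC
      · right
        obtain ⟨p, hp, q, hq, hpq, h0⟩ := hline x y hy hyC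
        have hy' : -(p + q) = y := neg_eq_of_add_eq_zero_right h0
        rw [Finset.mem_image]
        refine ⟨(p, q), ?_, hy'⟩
        simp only [P, Finset.mem_filter, Finset.mem_univ, true_and]
        exact ⟨hpq, hCS x hp, hCS x hq, hy' ▸ hy⟩
    calc (S x).card ≤ _ := Finset.card_le_card hsub
      _ ≤ _ := Finset.card_union_le _ _
      _ ≤ _ := add_le_add (hB _ (hC x)) Finset.card_image_le
  have h2 : ∑ x, (P x).card ≤ 9 ^ d := by
    rw [← Finset.card_biUnion]
    · refine (Finset.card_le_univ _).trans ?_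
      simp [ZMod.card, ← mul_pow]
    · intro x _ x' _ hxx
      change Disjoint (P x) (P x')
      rw [Finset.disjoint_left]
      rintro ⟨p, q⟩ h h'
      simp only [P, Finset.mem_filter, Finset.mem_univ, true_and] at h h'
      exact hS x x' hxx p q (-(p + q)) h.1 (by abel) h.2.1 h.2.2.1 h.2.2.2 h'.2.1 h'.2.2.1 h'.2.2.2
  calc ∑ x, (S x).card ≤ ∑ x, (B + (P x).card) := Finset.sum_le_sum fun x _ => h1 x
    _ = Fintype.card X * B + ∑ x, (P x).card := by
      rw [Finset.sum_add_distrib]; simp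
    _ ≤ _ := by omega

lemma group_bound {n d B : ℕ} {G : Type*} [AddCommGroup G] [Fintype G] [DecidableEq G]
    (hB : ∀ C : Finset (Fin d → ZMod 3), IsCap C → C.card ≤ B)
    (α : (Fin n → ZMod 2) →+ G) (β : (Fin d → ZMod 3) →+ G)
    (hα : Function.Injective α) (hβ : Function.Injective β)
    (A : Finset G) (hA : ¬ IsDistinctAP 6 (A : Set G)) :
    A.card * (2 ^ n * 3 ^ d) ≤ Fintype.card G * (2 ^ n * B + 9 ^ d) := by
  classical
  have h2s : ∀ u : Fin n → ZMod 2, u + u = 0 := by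
    intro u
    funext i
    have : ∀ s : ZMod 2, s + s = 0 := by decide
    exact this _
  let S : G → (Fin n → ZMod 2) → Finset (Fin d → ZMod 3) := fun g x =>
    Finset.univ.filter fun y => g + α x + β y ∈ A
  have hS : ∀ g, ∑ x, (S g x).card ≤ 2 ^ n * B + 9 ^ d := by
    intro g
    have := fiber_bound hB (S g) ?_
    · simpa [ZMod.card] using this
    intro x x' hx p q r hpq h0 hp hq hr hp' hq' hr'
    simp only [S, Finset.mem_filter, Finset.mem_univ, true_and] at hp hq hr hp' hq' hr'
    apply hA
    set u := x' - x with hu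
    set v := q - p with hv
    have hu0 : u ≠ 0 := sub_ne_zero.mpr hx.symm
    have hv0 : v ≠ 0 := sub_ne_zero.mpr hpq.symm
    have hx' : x' = x + u := by rw [hu]; abel
    have hq1 : q = p + v := by rw [hv]; abel
    have hr1 : r = p + 2 • v := by
      have h3 := three_self p
      have h3' := three_self q
      have e1 : r = -(p + q) := (neg_eq_of_add_eq_zero_right h0).symm
      rw [e1, hv, ← sub_eq_zero]
      have : -(p + q) - (p + 2 • (q - p)) = -(q + q + q) := by abel
      rw [this, h3', neg_zero]
    rw [hx'] at hp' hq' hr'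
    rw [hq1] at hq hq'
    rw [hr1] at hr hr'
    have hαu : α u + α u = 0 := by rw [← map_add, h2s, map_zero]
    have hβv : β v + β v + β v = 0 := by rw [← map_add, ← map_add, three_self, map_zero]
    have hα2 : 2 • α u = 0 := by rw [two_nsmul, hαu]
    have hβ3 : 3 • β v = 0 := by rw [← hβv]; abel
    have hαu0 : α u ≠ 0 := fun h => hu0 (hα (by rw [h, map_zero]))
    have hβv0 : β v ≠ 0 := fun h => hv0 (hβ (by rw [h, map_zero]))
    have ho : addOrderOf (α u + β v) = 6 := by
      have o2 : addOrderOf (α u) = 2 := addOrderOf_eq_prime hα2 hαu0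
      have o3 : addOrderOf (β v) = 3 := addOrderOf_eq_prime hβ3 hβv0
      have := (AddCommute.all (α u) (β v)).addOrderOf_add_eq_mul_addOrderOf_of_coprime
        (by rw [o2, o3]; norm_num)
      rw [this, o2, o3]
    refine ⟨g + α x + β p, α u + β v, ?_, ?_⟩
    · simp only [map_add, map_nsmul] at hp hq hr hp' hq' hr'
      intro i
      rw [Finset.mem_coe]
      fin_cases i
      · simpa using hp
      · convert hq' using 1
        simp only []
        abel
      · convert hr using 1
        rw [← sub_eq_zero]
        trans 2 • α u
        · simp only []; abel
        · exact hα2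
      · convert hp' using 1
        rw [← sub_eq_zero]
        trans 2 • α u + 3 • β v
        · simp only []; abel
        · rw [hα2, hβ3, add_zero]
      · convert hq using 1
        rw [← sub_eq_zero]
        trans 2 • (2 • α u) + 3 • β v
        · simp only []; abel
        · rw [hα2, hβ3, add_zero, nsmul_zero]
      · convert hr' using 1
        rw [← sub_eq_zero]
        trans 2 • (2 • α u) + 3 • β v
        · simp only []; abel
        · rw [hα2, hβ3, add_zero, nsmul_zero]
    · intro i j hij
      have h1 : (i : ℕ) • (α u + β v) = (j : ℕ) • (α u + β v) := add_left_cancel hij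
      have h2 := nsmul_injOn_Iio_addOrderOf (x := α u + β v)
        (by rw [ho]; exact i.2) (by rw [ho]; exact j.2) h1
      exact Fin.ext h2
  have hsum : ∑ g, ∑ x, (S g x).card = A.card * (2 ^ n * 3 ^ d) := by
    simp only [S, Finset.card_filter]
    rw [Finset.sum_comm]
    have : ∀ x : Fin n → ZMod 2, ∑ g : G, ∑ y : Fin d → ZMod 3,
        (if g + α x + β y ∈ A then 1 else 0) = 3 ^ d * A.card := by
      intro x
      rw [Finset.sum_comm]
      have : ∀ y : Fin d → ZMod 3, ∑ g : G, (if g + α x + β y ∈ A then 1 else 0) = A.card := by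
        intro y
        rw [← (Equiv.subRight (α x + β y)).sum_comp]
        simp [add_assoc]
      simp [this, ZMod.card]
    rw [Finset.sum_congr rfl fun x _ => this x]
    simp [ZMod.card]
    ring
  rw [← hsum]
  calc _ ≤ ∑ g : G, (2 ^ n * B + 9 ^ d) := Finset.sum_le_sum fun g _ => hS g
    _ = _ := by simp

lemma exists_emb (p m : ℕ) [NeZero p] (hm : 0 < m) (h : p ∣ m) :
    ∃ f : ZMod p →+ ZMod m, Function.Injective f := by
  obtain ⟨c, rfl⟩ := h
  have hc : 0 < c := Nat.pos_of_mul_pos_left hm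
  refine ⟨ZMod.lift p ⟨zmultiplesHom _ (c : ZMod (p * c)), ?_⟩, ?_⟩
  · simp only [zmultiplesHom_apply, natCast_zsmul, nsmul_eq_mul]
    exact_mod_cast ZMod.natCast_self (p * c)
  · rw [ZMod.lift_injective]
    intro k hk
    simp only [zmultiplesHom_apply, zsmul_eq_mul] at hk
    have hk' : ((k * (c : ℤ) : ℤ) : ZMod (p * c)) = 0 := by push_cast; exact hk
    rw [CharP.intCast_eq_zero_iff (ZMod (p * c)) (p * c)] at hk'
    rw [CharP.intCast_eq_zero_iff (ZMod p) p]
    push_cast at hk'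
    exact Int.dvd_of_mul_dvd_mul_right (by exact_mod_cast hc.ne') hk'

lemma pi_emb {d n p m : ℕ} (hd : d ≤ n) (f : ZMod p →+ ZMod m) (hf : Function.Injective f) :
    ∃ F : (Fin d → ZMod p) →+ (Fin n → ZMod m), Function.Injective F := by
  refine ⟨AddMonoidHom.mk' (fun v i => if h : (i : ℕ) < d then f (v ⟨i, h⟩) else 0) ?_, ?_⟩
  · intro a b
    funext i
    by_cases h : (i : ℕ) < d <;> simp [h]
  · intro a b hab
    funext i
    have := congrFun hab ⟨i, i.2.trans_le hd⟩
    simp at this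
    exact hf this

lemma ap_mono {G : Type*} [AddCommGroup G] {k l : ℕ} (h : k ≤ l) (A : Set G)
    (hA : IsDistinctAP l A) : IsDistinctAP k A := by
  obtain ⟨a, d, h1, h2⟩ := hA
  refine ⟨a, d, fun i => h1 (Fin.castLE h i), fun i j hij => ?_⟩
  exact Fin.castLE_injective h (h2 hij)

lemma numeric : ∃ N : ℕ, ∀ q, N ≤ q → (4 : ℝ) * 0.5515 ^ q ≤ 0.952 ^ 11 * (0.952 ^ 12) ^ q := by
  have ht := tendsto_pow_atTop_nhds_zero_of_lt_one (r := (0.5515 / 0.952 ^ 12 : ℝ))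
    (by norm_num) (by norm_num)
  have he := ht.eventually (gt_mem_nhds (show (0 : ℝ) < 0.952 ^ 11 / 4 by norm_num))
  obtain ⟨N, hN⟩ := Filter.eventually_atTop.mp he
  refine ⟨N, fun q hq => ?_⟩
  have := hN q hq
  rw [div_pow, div_lt_div_iff₀ (by positivity) (by norm_num)] at this
  linarith

theorem rk_mult_of_six :
    ∀ k ∈ ({4, 5, 6} : Set ℕ), ∃ N : ℕ, ∀ n : ℕ, N ≤ n → ∀ m : ℕ, 0 < m → 6 ∣ m →
      (rAP k m n : ℝ) ≤ (0.952 * m) ^ n := by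
  intro k hk
  have hk6 : k ≤ 6 := by
    simp only [Set.mem_insert_iff, Set.mem_singleton_iff] at hk
    omega
  obtain ⟨N, hN⟩ := numeric
  refine ⟨12 * N, fun n hn m hm h6 => ?_⟩
  have : NeZero m := ⟨hm.ne'⟩
  obtain ⟨f2, hf2⟩ := exists_emb 2 m hm (dvd_trans (by norm_num) h6)
  obtain ⟨f3, hf3⟩ := exists_emb 3 m hm (dvd_trans (by norm_num) h6)
  obtain ⟨q, hq⟩ : ∃ q, q = n / 12 := ⟨_, rfl⟩
  have hd : 7 * q ≤ n := by omega
  obtain ⟨α, hα⟩ := pi_emb (le_refl n) f2 hf2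
  obtain ⟨β, hβ⟩ := pi_emb hd f3 hf3
  have hnum := hN q (by omega)
  have main : ∀ A : Finset (Fin n → ZMod m), ¬ IsDistinctAP k (A : Set (Fin n → ZMod m)) →
      (A.card : ℝ) ≤ (0.952 * m) ^ n := by
    intro A hA
    have hb := group_bound (fun C hC => cap_card C hC) α β hα hβ A
      (fun h => hA (ap_mono hk6 _ h))
    have hb' : (A.card : ℝ) * (2 ^ n * 3 ^ (7 * q)) ≤
        m ^ n * (2 ^ n * (3 * (lowM (7 * q)).card) + 9 ^ (7 * q)) := by
      have : Fintype.card (Fin n → ZMod m) = m ^ n := by simp [ZMod.card]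
      rw [this] at hb
      exact_mod_cast hb
    have hM := lowM_card (7 * q)
    have e1 : (2.7552 : ℝ) ^ (7 * q) ≤ 3 ^ (7 * q) * 0.5515 ^ q := by
      rw [pow_mul, pow_mul, ← mul_pow]
      exact pow_le_pow_left₀ (by norm_num) (by norm_num) q
    have e2 : (3 : ℝ) ^ (7 * q) ≤ 2 ^ n * 0.5515 ^ q := by
      calc (3 : ℝ) ^ (7 * q) ≤ 2 ^ (12 * q) * 0.5515 ^ q := by
            rw [pow_mul, pow_mul, ← mul_pow]
            exact pow_le_pow_left₀ (by norm_num) (by norm_num) q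
        _ ≤ _ := by
            gcongr
            · norm_num
            · omega
    have e3 : (9 : ℝ) ^ (7 * q) = 3 ^ (7 * q) * 3 ^ (7 * q) := by
      rw [← mul_pow]; norm_num
    have e4 : (0.952 : ℝ) ^ 11 * (0.952 ^ 12) ^ q ≤ 0.952 ^ n := by
      rw [← pow_mul, ← pow_add]
      exact pow_le_pow_of_le_one (by norm_num) (by norm_num) (by omega)
    have e5 : (2 : ℝ) ^ n * (3 * (lowM (7 * q)).card) + 9 ^ (7 * q) ≤
        0.952 ^ n * (2 ^ n * 3 ^ (7 * q)) := by
      calc (2 : ℝ) ^ n * (3 * (lowM (7 * q)).card) + 9 ^ (7 * q)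
          ≤ 2 ^ n * (3 * (3 ^ (7 * q) * 0.5515 ^ q)) + 3 ^ (7 * q) * (2 ^ n * 0.5515 ^ q) := by
            rw [e3]
            have := hM.trans e1
            gcongr
        _ = (4 * 0.5515 ^ q) * (2 ^ n * 3 ^ (7 * q)) := by ring
        _ ≤ _ := by
            have := hnum.trans e4
            gcongr
    have hpos : (0 : ℝ) < 2 ^ n * 3 ^ (7 * q) := by positivity
    refine le_of_mul_le_mul_right (hb'.trans ?_) hpos
    calc (m : ℝ) ^ n * (2 ^ n * (3 * (lowM (7 * q)).card) + 9 ^ (7 * q))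
        ≤ m ^ n * (0.952 ^ n * (2 ^ n * 3 ^ (7 * q))) := by gcongr
      _ = _ := by rw [mul_pow]; ring
  have hR : (0 : ℝ) ≤ (0.952 * m) ^ n := by positivity
  refine le_trans ?_ (Nat.floor_le hR)
  have : rAP k m n ≤ ⌊((0.952 : ℝ) * m) ^ n⌋₊ := by
    apply csSup_le'
    rintro s ⟨A, hA, rfl⟩
    exact Nat.le_floor (main A hA)
  exact_mod_cast this
end

section
/- For every n ≥ 1, r_6(ℤ_6^n) ≤ 2^{n+1} · √(3^n · r_3(ℤ_3^n)). -/
theorem rAP_bdd (k m n : ℕ) [NeZero m] : BddAbove {s : ℕ | ∃ A : Finset (Fin n → ZMod m),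
    ¬ IsDistinctAP k (A : Set (Fin n → ZMod m)) ∧ A.card = s} := by
  refine ⟨Fintype.card (Fin n → ZMod m), ?_⟩
  rintro s ⟨A, -, rfl⟩
  exact Finset.card_le_univ A

theorem card_le_rAP (k m n : ℕ) [NeZero m] (A : Finset (Fin n → ZMod m))
    (h : ¬ IsDistinctAP k (A : Set (Fin n → ZMod m))) : A.card ≤ rAP k m n :=
  le_csSup (rAP_bdd k m n) ⟨A, h, rfl⟩

theorem rAP_attained (k m n : ℕ) [NeZero m] (hk : 0 < k) : ∃ A : Finset (Fin n → ZMod m),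
    ¬ IsDistinctAP k (A : Set (Fin n → ZMod m)) ∧ A.card = rAP k m n := by
  refine Nat.sSup_mem ?_ (rAP_bdd k m n)
  refine ⟨0, ∅, ?_, rfl⟩
  rintro ⟨a, d, h, -⟩
  simpa using h ⟨0, hk⟩

theorem one_le_r3 (n : ℕ) : 1 ≤ rAP 3 3 n := by
  refine le_trans ?_ (card_le_rAP 3 3 n {0} ?_)
  · simp
  · rintro ⟨a, d, h, hi⟩
    have h0 := h 0
    have h1 := h 1
    have := @hi 0 1 (by
      simp only [Finset.coe_singleton, Set.mem_singleton_iff] at h0 h1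
      simp only [h0, h1])
    exact absurd this (by decide)

theorem small_inj : ∀ i j : Fin 6, ∀ u : ZMod 2, u ≠ 0 → ∀ v : ZMod 3, v ≠ 0 →
    ((i : ℕ) : ZMod 2) * u = ((j : ℕ) : ZMod 2) * u →
    ((i : ℕ) : ZMod 3) * v = ((j : ℕ) : ZMod 3) * v → i = j := by decide

def crtPi (n : ℕ) : (Fin n → ZMod 6) ≃+ (Fin n → ZMod 2) × (Fin n → ZMod 3) where
  toFun f := (fun k => (ZMod.chineseRemainder (m := 2) (n := 3) (by decide) (f k)).1,
    fun k => (ZMod.chineseRemainder (m := 2) (n := 3) (by decide) (f k)).2)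
  invFun p := fun k => (ZMod.chineseRemainder (m := 2) (n := 3) (by decide)).symm (p.1 k, p.2 k)
  left_inv f := by
    funext k
    exact (ZMod.chineseRemainder (m := 2) (n := 3) (by decide)).symm_apply_apply (f k)
  right_inv p := by
    ext k
    · simp only [RingEquiv.apply_symm_apply]
    · simp only [RingEquiv.apply_symm_apply]
  map_add' f g := by
    ext k
    · exact congrArg Prod.fst
        (map_add (ZMod.chineseRemainder (m := 2) (n := 3) (by decide)) (f k) (g k))
    · exact congrArg Prod.snd
        (map_add (ZMod.chineseRemainder (m := 2) (n := 3) (by decide)) (f k) (g k))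

theorem mem2 {n : ℕ} (x y : Fin n → ZMod 2) (i : ℕ) :
    x + i • (y - x) = x ∨ x + i • (y - x) = y := by
  have h2 : (2 : ℕ) • (y - x) = 0 := by
    funext k
    simp only [Pi.smul_apply, Pi.zero_apply]
    generalize (y - x) k = u
    revert u; decide
  rcases Nat.even_or_odd' i with ⟨c, rfl | rfl⟩
  · left; rw [mul_comm, mul_smul, h2]; simp
  · right; rw [add_smul, mul_comm, mul_smul, h2]; simp

theorem mod3 {n : ℕ} (d : Fin n → ZMod 3) (i : ℕ) : i • d = (i % 3) • d := by
  have h3 : (3 : ℕ) • d = 0 := by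
    funext k
    simp only [Pi.smul_apply, Pi.zero_apply]
    generalize d k = u
    revert u; decide
  conv_lhs => rw [← Nat.div_add_mod i 3, add_smul, mul_comm, mul_smul, h3]
  simp

theorem inter_le (n : ℕ) (A : Finset (Fin n → ZMod 6))
    (hA : ¬ IsDistinctAP 6 (A : Set (Fin n → ZMod 6))) (x y : Fin n → ZMod 2) (hxy : x ≠ y) :
    (Finset.univ.filter (fun z : Fin n → ZMod 3 =>
      (crtPi n).symm (x, z) ∈ A ∧ (crtPi n).symm (y, z) ∈ A)).card ≤ rAP 3 3 n := by
  apply card_le_rAP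
  rintro ⟨a, d, h, hi⟩
  apply hA
  have hd : d ≠ 0 := by
    rintro rfl
    exact absurd (@hi 0 1 (by simp)) (by decide)
  have hu : y - x ≠ 0 := sub_ne_zero.2 hxy.symm
  obtain ⟨k, hk⟩ := Function.ne_iff.1 hd
  obtain ⟨l, hl⟩ := Function.ne_iff.1 hu
  have key : ∀ i : ℕ, (crtPi n).symm (x, a) + i • (crtPi n).symm (y - x, d)
      = (crtPi n).symm (x + i • (y - x), a + i • d) := by
    intro i
    rw [← map_nsmul, ← map_add]; rfl
  refine ⟨(crtPi n).symm (x, a), (crtPi n).symm (y - x, d), ?_, ?_⟩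
  · intro i
    rw [key]
    have h' := h ⟨(i : ℕ) % 3, Nat.mod_lt _ (by norm_num)⟩
    simp only [Finset.coe_filter, Finset.mem_univ, true_and, Set.mem_setOf_eq] at h'
    rw [mod3 d i]
    rcases mem2 x y i with e | e <;> rw [e]
    · exact h'.1
    · exact h'.2
  · intro i j hij
    simp only [key] at hij
    have hij := (crtPi n).symm.injective hij
    have h1 := congrArg Prod.fst hij
    have h2 := congrArg Prod.snd hij
    simp only [add_right_inj] at h1 h2
    have h1 := congrFun h1 l
    have h2 := congrFun h2 k
    rw [Pi.smul_apply, Pi.smul_apply, nsmul_eq_mul, nsmul_eq_mul] at h1 h2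
    exact small_inj i j _ hl _ hk h1 h2

theorem double_count (n : ℕ) (A : Finset (Fin n → ZMod 6))
    (hA : ¬ IsDistinctAP 6 (A : Set (Fin n → ZMod 6))) :
    A.card ^ 2 ≤ 3 ^ n * (A.card + 2 ^ n * 2 ^ n * rAP 3 3 n) := by
  classical
  let f : (Fin n → ZMod 2) → (Fin n → ZMod 3) → ℕ :=
    fun x z => if (crtPi n).symm (x, z) ∈ A then 1 else 0
  have hc : A.card = ∑ z, ∑ x, f x z := by
    rw [Finset.sum_comm, ← Fintype.sum_prod_type']
    have := Equiv.sum_comp (crtPi n).symm.toEquiv (fun w => if w ∈ A then 1 else 0)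
    refine Eq.trans ?_ this.symm
    simp
  have hcs : (∑ z, ∑ x, f x z) ^ 2 ≤ 3 ^ n * ∑ z, (∑ x, f x z) ^ 2 := by
    have := sq_sum_le_card_mul_sum_sq (s := (Finset.univ : Finset (Fin n → ZMod 3)))
      (f := fun z => ∑ x, f x z)
    simpa [ZMod.card] using this
  have hsum : ∑ z, (∑ x, f x z) ^ 2 = ∑ x, ∑ y, ∑ z, f x z * f y z := by
    simp_rw [sq, Finset.sum_mul_sum]
    rw [Finset.sum_comm]
    refine Finset.sum_congr rfl fun x _ => ?_
    rw [Finset.sum_comm]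
  have hb : ∀ x y, ∑ z, f x z * f y z ≤ (if x = y then ∑ z, f x z else 0) + rAP 3 3 n := by
    intro x y
    split_ifs with h
    · subst h
      refine le_trans (le_of_eq ?_) (Nat.le_add_right _ _)
      refine Finset.sum_congr rfl fun z _ => ?_
      simp only [f]; split_ifs <;> rfl
    · rw [zero_add]
      refine le_trans (le_of_eq ?_) (inter_le n A hA x y h)
      rw [Finset.card_filter]
      refine Finset.sum_congr rfl fun z _ => ?_
      simp only [f]
      split_ifs <;> simp_all
  have hfin : ∑ z, (∑ x, f x z) ^ 2 ≤ A.card + 2 ^ n * 2 ^ n * rAP 3 3 n := by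
    rw [hsum]
    refine le_trans (Finset.sum_le_sum fun x _ => Finset.sum_le_sum fun y _ => hb x y) ?_
    simp only [Finset.sum_add_distrib, Finset.sum_ite_eq, Finset.mem_univ, if_true]
    rw [hc, Finset.sum_comm]
    simp [ZMod.card, mul_assoc]
  calc A.card ^ 2 = (∑ z, ∑ x, f x z) ^ 2 := by rw [← hc]
    _ ≤ _ := hcs
    _ ≤ _ := Nat.mul_le_mul_left _ hfin

theorem r6_le_sqrt (n : ℕ) (hn : 1 ≤ n) :
    (rAP 6 6 n : ℝ) ≤ 2 ^ (n + 1) * Real.sqrt (3 ^ n * rAP 3 3 n) := by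
  obtain ⟨A, hA, hc⟩ := rAP_attained 6 6 n (by norm_num)
  have h := double_count n A hA
  rw [hc] at h
  have hr := one_le_r3 n
  have hM : 3 ^ n ≤ 2 ^ n * 2 ^ n * rAP 3 3 n := by
    rw [← mul_pow]
    calc 3 ^ n ≤ (2 * 2) ^ n := Nat.pow_le_pow_left (by norm_num) n
      _ ≤ _ := Nat.le_mul_of_pos_right _ hr
  have h' : (rAP 6 6 n : ℝ) ^ 2 ≤ 3 ^ n * (rAP 6 6 n + 2 ^ n * 2 ^ n * rAP 3 3 n) := by
    exact_mod_cast h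
  have hM' : (3 : ℝ) ^ n ≤ 2 ^ n * 2 ^ n * rAP 3 3 n := by exact_mod_cast hM
  have hfin : (rAP 6 6 n : ℝ) ^ 2 ≤ (2 ^ (n + 1)) ^ 2 * (3 ^ n * rAP 3 3 n) := by
    have e : ((2 : ℝ) ^ (n + 1)) ^ 2 * (3 ^ n * rAP 3 3 n)
        = 4 * (3 ^ n * (2 ^ n * 2 ^ n * rAP 3 3 n)) := by ring
    rw [e]
    have hMp : (0 : ℝ) < 3 ^ n := by positivity
    generalize (2 : ℝ) ^ n * 2 ^ n * rAP 3 3 n = Q at *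
    generalize (3 : ℝ) ^ n = M at *
    generalize (rAP 6 6 n : ℝ) = a at *
    nlinarith [sq_nonneg (a - 2 * M), mul_le_mul_of_nonneg_left hM' hMp.le]
  rw [← Real.sqrt_sq (show (0 : ℝ) ≤ 2 ^ (n + 1) by positivity), ← Real.sqrt_mul (by positivity)]
  exact Real.le_sqrt_of_sq_le hfin
end

section
/- For every n ≥ 1, the maximum of the total size ∑_{r ∈ (ℤ/2ℤ)^n} |A(r)| over all families of subsets A(r) ⊆ (ℤ/3ℤ)^n indexed by r ∈ (ℤ/2ℤ)^n satisfying property (*)_4 equals r_4(ℤ_6^n). -/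
theorem aux_ap {G H K : Type*} [AddCommGroup G] [AddCommGroup H] [AddCommGroup K]
    (e : G ≃+ H × K) (hH : ∀ x : H, x + x = 0) (hK : ∀ x : K, x + x + x = 0)
    (S : Set G) (A : H → Set K) (hSA : ∀ r x, x ∈ A r ↔ e.symm (r, x) ∈ S) :
    IsDistinctAP 4 S ↔ ∃ (r' r'' : H) (a b c : K), r' ≠ r'' ∧
        a + c = b + b ∧ a ≠ b ∧ a ≠ c ∧ b ≠ c ∧
        a ∈ A r' ∧ b ∈ A r' ∧ a ∈ A r'' ∧ c ∈ A r'' := by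
  have key : ∀ (g : G) (r : H) (x : K), e g = (r, x) → (g ∈ S ↔ x ∈ A r) := by
    intro g r x h
    rw [hSA, ← h, e.symm_apply_apply]
  have hK3 : ∀ x : K, (3 : ℕ) • x = 0 := by
    intro x; rw [← hK x]; abel
  have hH2 : ∀ x : H, (2 : ℕ) • x = 0 := by
    intro x; rw [two_nsmul, hH]
  constructor
  · rintro ⟨a, d, hm, hi⟩
    obtain ⟨r, x, hx⟩ : ∃ r x, e a = (r, x) := ⟨_, _, rfl⟩
    obtain ⟨s, y, hy⟩ : ∃ r x, e d = (r, x) := ⟨_, _, rfl⟩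
    have hs : s ≠ 0 := by
      intro hs
      have : (0 : Fin 4) = 3 := by
        apply hi
        apply e.injective
        ext <;> simp [hx, hy, hs, hK3]
      exact absurd this (by decide)
    have hy0 : y ≠ 0 := by
      intro hs
      have : (0 : Fin 4) = 2 := by
        apply hi
        apply e.injective
        ext <;> simp [hx, hy, hs, hH2]
      exact absurd this (by decide)
    have h0 := (key _ r x (by simp [hx])).1 (hm 0)
    have h1 := (key _ (r + s) (x + y) (by simp [hx, hy])).1 (hm 1)
    have h2 := (key _ r (x + y + y) (by
      simp [hx, hy, hH2, two_nsmul, hH, add_assoc])).1 (hm 2)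
    have h3 := (key _ (r + s) x (by
      have : (3 : ℕ) • s = s := by rw [succ_nsmul, hH2, zero_add]
      simp [hx, hy, hK3, this])).1 (hm 3)
    refine ⟨r, r + s, x, x + y + y, x + y, by simpa using hs, ?_, ?_, by simpa using hy0,
      by simpa using hy0, h0, h2, h3, h1⟩
    · calc x + (x + y) = x + (x + y) + (y + y + y) := by rw [hK, add_zero]
        _ = _ := by abel
    · intro h
      apply hy0
      have h4 : y + y = 0 := by simpa [add_assoc] using h
      have := hK y
      rwa [h4, zero_add] at this
  · rintro ⟨r, r', a, b, c, hr, habc, hab, hac, hbc, h1, h2, h3, h4⟩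
    have hb : a + (2 : ℕ) • (c - a) = b := by
      have e1 : a + (2 : ℕ) • (c - a) = b + (b + b - (a + c)) + (c + c + c) - (b + b + b) := by
        abel
      rw [e1, hK, hK, habc]; abel
    have hr2 : r + (2 : ℕ) • (r' - r) = r := by simp [hH2]
    have hr3 : r + (3 : ℕ) • (r' - r) = r' := by
      rw [succ_nsmul, hH2]; abel
    have ha3 : a + (3 : ℕ) • (c - a) = a := by simp [hK3]
    have E0 : e (e.symm (r, a) + (0 : ℕ) • e.symm (r' - r, c - a)) = (r, a) := by simp
    have E1 : e (e.symm (r, a) + (1 : ℕ) • e.symm (r' - r, c - a)) = (r', c) := by simp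
    have E2 : e (e.symm (r, a) + (2 : ℕ) • e.symm (r' - r, c - a)) = (r, b) := by
      simp only [map_add, map_nsmul, e.apply_symm_apply, Prod.smul_mk, Prod.mk_add_mk, hr2, hb]
    have E3 : e (e.symm (r, a) + (3 : ℕ) • e.symm (r' - r, c - a)) = (r', a) := by
      simp only [map_add, map_nsmul, e.apply_symm_apply, Prod.smul_mk, Prod.mk_add_mk, hr3, ha3]
    refine ⟨e.symm (r, a), e.symm (r' - r, c - a), ?_, ?_⟩
    · intro i
      fin_cases i
      · exact (key _ _ _ E0).2 h1
      · exact (key _ _ _ E1).2 h4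
      · exact (key _ _ _ E2).2 h2
      · exact (key _ _ _ E3).2 h3
    · intro i j hij
      have hij := congrArg e hij
      have F : ∀ i : Fin 4, e (e.symm (r, a) + (i : ℕ) • e.symm (r' - r, c - a))
          = (![(r, a), (r', c), (r, b), (r', a)] : Fin 4 → H × K) i := by
        intro i
        fin_cases i
        exacts [E0, E1, E2, E3]
      simp only [F] at hij
      clear F E0 E1 E2 E3
      have hr' := hr.symm
      have hab' := hab.symm
      have hac' := hac.symm
      have hbc' := hbc.symm
      fin_cases i <;> fin_cases j <;> first | rfl | (exfalso; simp [hr, hr', hab, hac, hbc, hab', hac', hbc'] at hij)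

theorem aux_card {G H K : Type*} [Fintype H] [DecidableEq G] (e : G ≃ H × K)
    (S : Finset G) (A : H → Finset K) (hSA : ∀ r x, x ∈ A r ↔ e.symm (r, x) ∈ S) :
    S.card = ∑ r, (A r).card := by
  classical
  rw [← Finset.card_sigma]
  refine Finset.card_bij (fun g _ => ⟨(e g).1, (e g).2⟩) ?_ ?_ ?_
  · intro g hg
    simp [hSA, hg]
  · intro g _ g' _ h
    apply e.injective
    simp only [Sigma.mk.injEq, heq_eq_eq] at h
    exact Prod.ext h.1 h.2
  · rintro ⟨r, x⟩ h
    refine ⟨e.symm (r, x), ?_, ?_⟩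
    · simpa [hSA] using h
    · simp

theorem aux_equiv (n : ℕ) :
    Nonempty ((Fin n → ZMod 6) ≃+ (Fin n → ZMod 2) × (Fin n → ZMod 3)) := by
  have f : ZMod 6 ≃+* ZMod 2 × ZMod 3 := ZMod.chineseRemainder (m := 2) (n := 3) (by norm_num)
  refine ⟨{ toFun := fun g => (fun i => (f (g i)).1, fun i => (f (g i)).2)
            invFun := fun p i => f.symm (p.1 i, p.2 i)
            left_inv := ?_
            right_inv := ?_
            map_add' := ?_ }⟩
  · intro g; ext i; simp
  · intro p; ext i <;> simp
  · intro g h; ext i <;> simp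

theorem subset_reformulation_star4 (n : ℕ) (hn : 1 ≤ n) :
    IsGreatest {S : ℕ | ∃ A : (Fin n → ZMod 2) → Finset (Fin n → ZMod 3),
      (¬ ∃ (r' r'' : Fin n → ZMod 2) (a b c : Fin n → ZMod 3), r' ≠ r'' ∧
        a + c = b + b ∧ a ≠ b ∧ a ≠ c ∧ b ≠ c ∧
        a ∈ A r' ∧ b ∈ A r' ∧ a ∈ A r'' ∧ c ∈ A r'') ∧
      S = ∑ r : Fin n → ZMod 2, (A r).card}
    (rAP 4 6 n) := by
  classical
  obtain ⟨e⟩ := aux_equiv n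
  have hH : ∀ x : Fin n → ZMod 2, x + x = 0 := by
    intro x; ext i; exact (by decide : ∀ y : ZMod 2, y + y = 0) (x i)
  have hK : ∀ x : Fin n → ZMod 3, x + x + x = 0 := by
    intro x; ext i; exact (by decide : ∀ y : ZMod 3, y + y + y = 0) (x i)
  have hset : {S : ℕ | ∃ A : (Fin n → ZMod 2) → Finset (Fin n → ZMod 3),
      (¬ ∃ (r' r'' : Fin n → ZMod 2) (a b c : Fin n → ZMod 3), r' ≠ r'' ∧
        a + c = b + b ∧ a ≠ b ∧ a ≠ c ∧ b ≠ c ∧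
        a ∈ A r' ∧ b ∈ A r' ∧ a ∈ A r'' ∧ c ∈ A r'') ∧
      S = ∑ r : Fin n → ZMod 2, (A r).card} =
      {s : ℕ | ∃ A : Finset (Fin n → ZMod 6),
    ¬ IsDistinctAP 4 (A : Set (Fin n → ZMod 6)) ∧ A.card = s} := by
    ext s
    constructor
    · rintro ⟨A, hA, rfl⟩
      let S : Finset (Fin n → ZMod 6) := Finset.univ.filter fun g => (e g).2 ∈ A (e g).1
      have hSA : ∀ r x, x ∈ A r ↔ e.symm (r, x) ∈ S := by intro r x; simp [S]
      refine ⟨S, ?_, aux_card e.toEquiv S A hSA⟩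
      rw [aux_ap e hH hK (S : Set _) (fun r => (A r : Set _)) hSA]
      exact hA
    · rintro ⟨S, hS, rfl⟩
      let A : (Fin n → ZMod 2) → Finset (Fin n → ZMod 3) :=
        fun r => Finset.univ.filter fun x => e.symm (r, x) ∈ S
      have hSA : ∀ r x, x ∈ A r ↔ e.symm (r, x) ∈ S := by intro r x; simp [A]
      refine ⟨A, ?_, aux_card e.toEquiv S A hSA⟩
      rw [aux_ap e hH hK (S : Set _) (fun r => (A r : Set _)) hSA] at hS
      exact hS
  rw [hset]
  have hbdd : BddAbove {s : ℕ | ∃ A : Finset (Fin n → ZMod 6),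
    ¬ IsDistinctAP 4 (A : Set (Fin n → ZMod 6)) ∧ A.card = s} := by
    refine ⟨Fintype.card (Fin n → ZMod 6), ?_⟩
    rintro s ⟨A, -, rfl⟩
    exact Finset.card_le_univ A
  refine ⟨Nat.sSup_mem ⟨0, ∅, ?_, rfl⟩ hbdd, fun s hs => le_csSup hbdd hs⟩
  rintro ⟨a, d, h, -⟩
  simpa using h 0
end
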